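/- arXiv:2201.04462 — 4 statements merged into one kernel-verified Lean document; each statement's English description precedes it below -/
import Mathlib

section
/- For every x ∈ ℝⁿ and every real λ ≠ 0, it holds that τ(λx) = τ(x) and f(λx) = λ f(x); i.e., the sample system is homogeneous. -/
open Matrix

section QuadraticForm

variable {m R : Type*} [Fintype m]

theorem smul_dotProduct_mulVec_smul [CommSemiring R] (A : Matrix m m R) (c : R) (x : m → R) :
    (c • x) ⬝ᵥ A *ᵥ (c • x) = c * c * (x ⬝ᵥ A *ᵥ x) := by
  rw [mulVec_smul, smul_dotProduct, dotProduct_smul, smul_eq_mul, smul_eq_mul, mul_assoc]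

theorem smul_dotProduct_mulVec_smul_pos_iff [CommRing R] [LinearOrder R] [IsStrictOrderedRing R]
    (A : Matrix m m R) {c : R} (hc : c ≠ 0) (x : m → R) :
    0 < (c • x) ⬝ᵥ A *ᵥ (c • x) ↔ 0 < x ⬝ᵥ A *ᵥ x := by
  rw [smul_dotProduct_mulVec_smul, mul_pos_iff_of_pos_left (mul_self_pos.mpr hc)]

end QuadraticForm

section SampleSystem

variable {m R α : Type*} [Fintype m] [CommRing R] [LinearOrder R]

/-- The checking times in `T` at which the state `x` triggers an event: those where the quadratic
form of `N s` is positive at `x`, together with the maximum inter-event time `τbar` if it is itself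
a checking time. The inter-event time of `x` is the infimum of this set. -/
def triggeringTimes (T : Set α) (τbar : α) (N : α → Matrix m m R) (x : m → R) : Set α :=
  {s | s ∈ T ∧ (0 < x ⬝ᵥ N s *ᵥ x ∨ s = τbar)}

variable [IsStrictOrderedRing R]

theorem triggeringTimes_smul (T : Set α) (τbar : α) (N : α → Matrix m m R) {c : R} (hc : c ≠ 0)
    (x : m → R) : triggeringTimes T τbar N (c • x) = triggeringTimes T τbar N x := by
  simp only [triggeringTimes, smul_dotProduct_mulVec_smul_pos_iff _ hc]

theorem sample_system_homogeneous_general [InfSet α] (T : Set α) (τbar : α)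
    (N M : α → Matrix m m R) (τ : (m → R) → α) (hτ : ∀ x, τ x = sInf (triggeringTimes T τbar N x))
    (f : (m → R) → m → R) (hf : ∀ x, f x = M (τ x) *ᵥ x) (x : m → R) (c : R) (hc : c ≠ 0) :
    τ (c • x) = τ x ∧ f (c • x) = c • f x := by
  have τ_smul : τ (c • x) = τ x := by rw [hτ, hτ, triggeringTimes_smul T τbar N hc]
  exact ⟨τ_smul, by rw [hf, hf, τ_smul, mulVec_smul]⟩

end SampleSystem

/-- homogeneity of the sample system: for every `x` and every `c ≠ 0`,
`τ (c • x) = τ x` and `f (c • x) = c • f x`, where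
`τ x = inf {s ∈ 𝒯 : xᵀ N(s) x > 0 or s = τ̄}` and `f x = M (τ x) x`. -/
theorem sample_system_homogeneous
    {n : ℕ} (hn : 1 ≤ n) (T : Set ℝ) (τbar : ℝ) (hτbar : 0 < τbar)
    (N : ℝ → Matrix (Fin n) (Fin n) ℝ) (hN : ∀ s, (N s).IsSymm)
    (M : ℝ → Matrix (Fin n) (Fin n) ℝ)
    (τ : (Fin n → ℝ) → ℝ)
    (hτ : ∀ x, τ x = sInf {s | s ∈ T ∧ (0 < x ⬝ᵥ (N s) *ᵥ x ∨ s = τbar)})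
    (f : (Fin n → ℝ) → (Fin n → ℝ))
    (hf : ∀ x, f x = (M (τ x)) *ᵥ x) :
    ∀ (x : Fin n → ℝ) (c : ℝ), c ≠ 0 → τ (c • x) = τ x ∧ f (c • x) = c • f x :=
  sample_system_homogeneous_general T τbar N M τ hτ f hf
end

section
/- Let τ̄ > 0 and let N : ℝ → ℝ^{n×n} be a differentiable family of symmetric matrices with entrywise derivative Ṅ(s), and suppose that for every x ∈ ℝⁿ ∖ {0} and every s ∈ (0, τ̄], xᵀN(s)x = 0 implies xᵀṄ(s)x > 0. Then for every x ≠ 0 and every s ∈ (0, τ̄] with xᵀN(s)x = 0, one has xᵀN(s')x ≤ 0 for all s' ∈ (0, s); consequently, for each x ≠ 0 the function s ↦ xᵀN(s)x has at most one zero in (0, τ̄]. -/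
open Matrix Set

/-!
Fix `x` and put `f s = xᵀN(s)x`, so that `f` has positive slope at each of its zeros. Such an `f`
can cross zero only upwards: once nonnegative, it stays nonnegative. If `f b = 0` and `f a ≥ 0` for
some `a < b`, then `f ≥ 0 = f b` on `[a, b]`, so `b` minimizes `f` there and `f' b ≤ 0`, a
contradiction. Hence `f` is negative before any of its zeros, and two distinct zeros cannot exist.
-/

section ScalarCrossing

variable {f f' : ℝ → ℝ} {a b : ℝ} {I : Set ℝ}

theorem nonneg_on_Icc_of_deriv_pos_at_zeros
    (hf : ∀ s ∈ Icc a b, HasDerivWithinAt f (f' s) (Icc a b) s)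
    (hpos : ∀ s ∈ Ico a b, f s = 0 → 0 < f' s) (ha : 0 ≤ f a) :
    ∀ s ∈ Icc a b, 0 ≤ f s := by
  have hright : ∀ s ∈ Ico a b, HasDerivWithinAt f (f' s) (Ici s) s := fun s hs =>
    (hf s (Ico_subset_Icc_self hs)).mono_of_mem_nhdsWithin (Icc_mem_nhdsGE_of_mem hs)
  exact image_le_of_deriv_right_lt_deriv_boundary'
    continuousOn_const (fun s _ => hasDerivWithinAt_const s (Ici s) 0) ha
    (HasDerivWithinAt.continuousOn hf) hright fun s hs h => hpos s hs h.symm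

theorem deriv_nonpos_of_isLocalMinOn_Icc_right {c : ℝ} (hab : a < b)
    (hmin : IsLocalMinOn f (Icc a b) b) (hf : HasDerivWithinAt f c (Icc a b) b) : c ≤ 0 := by
  have hcone : a - b ∈ posTangentConeAt (Icc a b) b :=
    sub_mem_posTangentConeAt_of_segment_subset (by rw [segment_symm, segment_eq_Icc hab.le])
  have hdir : 0 ≤ (a - b) * c := by
    simpa using hmin.hasFDerivWithinAt_nonneg hf.hasFDerivWithinAt hcone
  exact nonpos_of_mul_nonneg_right hdir (sub_neg.mpr hab)

theorem neg_before_zero_of_deriv_pos_at_zeros [I.OrdConnected]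
    (hf : ∀ s ∈ I, HasDerivWithinAt f (f' s) I s) (hpos : ∀ s ∈ I, f s = 0 → 0 < f' s)
    (ha : a ∈ I) (hb : b ∈ I) (hab : a < b) (hfb : f b = 0) : f a < 0 := by
  have hsub : Icc a b ⊆ I := I.Icc_subset ha hb
  have hf_Icc : ∀ s ∈ Icc a b, HasDerivWithinAt f (f' s) (Icc a b) s :=
    fun s hs => (hf s (hsub hs)).mono hsub
  by_contra! hfa
  have hnonneg : ∀ s ∈ Icc a b, 0 ≤ f s := nonneg_on_Icc_of_deriv_pos_at_zeros hf_Icc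
    (fun s hs => hpos s (hsub (Ico_subset_Icc_self hs))) hfa
  have hmin : IsMinOn f (Icc a b) b := fun s hs => hfb.trans_le (hnonneg s hs)
  have hnonpos : f' b ≤ 0 := deriv_nonpos_of_isLocalMinOn_Icc_right hab hmin.localize
    (hf_Icc b (right_mem_Icc.mpr hab.le))
  exact hnonpos.not_gt (hpos b hb hfb)

theorem zeros_subsingleton_of_deriv_pos_at_zeros [I.OrdConnected]
    (hf : ∀ s ∈ I, HasDerivWithinAt f (f' s) I s) (hpos : ∀ s ∈ I, f s = 0 → 0 < f' s) :
    {s ∈ I | f s = 0}.Subsingleton := by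
  rintro s ⟨hs, hfs⟩ t ⟨ht, hft⟩
  by_contra hne
  rcases lt_or_gt_of_ne hne with hst | hts
  · exact (neg_before_zero_of_deriv_pos_at_zeros hf hpos hs ht hst hft).ne hfs
  · exact (neg_before_zero_of_deriv_pos_at_zeros hf hpos ht hs hts hfs).ne hft

end ScalarCrossing

theorem hasDerivWithinAt_dotProduct_mulVec {𝕜 𝔸 m n : Type*} [NontriviallyNormedField 𝕜]
    [NormedRing 𝔸] [NormedAlgebra 𝕜 𝔸] [Fintype m] [Fintype n] {M : 𝕜 → Matrix m n 𝔸}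
    {M' : Matrix m n 𝔸} {S : Set 𝕜} {s : 𝕜}
    (hM : ∀ i j, HasDerivWithinAt (fun u => M u i j) (M' i j) S s) (x : m → 𝔸) (y : n → 𝔸) :
    HasDerivWithinAt (fun u => x ⬝ᵥ M u *ᵥ y) (x ⬝ᵥ M' *ᵥ y) S s :=
  HasDerivWithinAt.fun_sum fun i _ => HasDerivWithinAt.const_mul (x i) <|
    HasDerivWithinAt.fun_sum fun j _ => (hM i j).mul_const (y j)

theorem triggering_function_single_crossing_general {ι : Type*} [Fintype ι]
    {I : Set ℝ} [I.OrdConnected] {N N' : ℝ → Matrix ι ι ℝ} {x : ι → ℝ}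
    (hderiv : ∀ s ∈ I, ∀ i j, HasDerivWithinAt (fun u => N u i j) (N' s i j) I s)
    (htrans : ∀ s ∈ I, x ⬝ᵥ N s *ᵥ x = 0 → 0 < x ⬝ᵥ N' s *ᵥ x) :
    (∀ s ∈ I, x ⬝ᵥ N s *ᵥ x = 0 → ∀ s' ∈ I, s' < s → x ⬝ᵥ N s' *ᵥ x < 0) ∧
    {s ∈ I | x ⬝ᵥ N s *ᵥ x = 0}.Subsingleton := by
  have hquad : ∀ s ∈ I, HasDerivWithinAt (fun u => x ⬝ᵥ N u *ᵥ x) (x ⬝ᵥ N' s *ᵥ x) I s :=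
    fun s hs => hasDerivWithinAt_dotProduct_mulVec (hderiv s hs) x x
  exact ⟨fun s hs hzero s' hs' hlt =>
      neg_before_zero_of_deriv_pos_at_zeros hquad htrans hs' hs hlt hzero,
    zeros_subsingleton_of_deriv_pos_at_zeros hquad htrans⟩

/-- if for every `x ≠ 0` and `s ∈ (0, τ̄]`, `xᵀN(s)x = 0` implies
`xᵀṄ(s)x > 0`, then whenever `xᵀN(s)x = 0` with `s ∈ (0, τ̄]` one has
`xᵀN(s')x ≤ 0` for all `s' ∈ (0, s)`; consequently `s ↦ xᵀN(s)x` has at most one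
zero in `(0, τ̄]`. -/
theorem triggering_function_single_crossing
    {n : ℕ} (τbar : ℝ) (hτbar : 0 < τbar)
    (N N' : ℝ → Matrix (Fin n) (Fin n) ℝ)
    (hsymm : ∀ s, (N s).IsSymm)
    (hderiv : ∀ (i j : Fin n) (s : ℝ), HasDerivAt (fun u => N u i j) (N' s i j) s)
    (htrans : ∀ (x : Fin n → ℝ), x ≠ 0 → ∀ s ∈ Ioc (0:ℝ) τbar,
      x ⬝ᵥ (N s) *ᵥ x = 0 → 0 < x ⬝ᵥ (N' s) *ᵥ x) :
    (∀ (x : Fin n → ℝ), x ≠ 0 → ∀ s ∈ Ioc (0:ℝ) τbar, x ⬝ᵥ (N s) *ᵥ x = 0 →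
      ∀ s' ∈ Ioo (0:ℝ) s, x ⬝ᵥ (N s') *ᵥ x ≤ 0) ∧
    (∀ (x : Fin n → ℝ), x ≠ 0 → ∀ s₁ ∈ Ioc (0:ℝ) τbar, ∀ s₂ ∈ Ioc (0:ℝ) τbar,
      x ⬝ᵥ (N s₁) *ᵥ x = 0 → x ⬝ᵥ (N s₂) *ᵥ x = 0 → s₁ = s₂) := by
  have hcross := fun x hx => triggering_function_single_crossing_general (I := Ioc 0 τbar)
    (fun s _ i j => (hderiv i j s).hasDerivWithinAt) (htrans x hx)
  exact ⟨fun x hx s hs hzero s' hs' =>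
      ((hcross x hx).1 s hs hzero s' ⟨hs'.1, hs'.2.le.trans hs.2⟩ hs'.2).le,
    fun x hx s₁ hs₁ s₂ hs₂ hzero₁ hzero₂ => (hcross x hx).2 ⟨hs₁, hzero₁⟩ ⟨hs₂, hzero₂⟩⟩
end

section
/- Let σ = (y₁, …, y_m) be a finite sequence of reals, assume M_σ := M(y_m)⋯M(y₂)M(y₁) is invertible, and let A ⊆ ℝⁿ be a linear subspace with M_σ A = A and A ∖ {0} ⊆ Q_σ. Then for every x ∈ A ∖ {0}, the trajectory x₀ = x, x_{k+1} = f(x_k) satisfies τ(x_{im+j−1}) = y_j for every i ∈ ℕ and every j ∈ {1, …, m}; i.e., the output sequence of the sample system started at x is the infinite periodic repetition σ^ω of σ. -/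
open Matrix

/-- The intersample state sequence generated from `x` by applying, in order, the
matrices `M (y 0), M (y 1), …, M (y (m-1))`: `z 0 = x`, `z (j+1) = M (y j) z j`
(indices beyond `m` are left unchanged). -/
def seqStates {n m : ℕ} (M : ℝ → Matrix (Fin n) (Fin n) ℝ) (y : Fin m → ℝ)
    (x : Fin n → ℝ) : ℕ → (Fin n → ℝ)
  | 0 => x
  | (j + 1) =>
    if h : j < m then (M (y ⟨j, h⟩)) *ᵥ (seqStates M y x j) else seqStates M y x j

/-!
Along a point of `Q_σ` the feedback law selects exactly the matrices of `σ`, so `f^[m]` acts on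
`Q_σ` as `M_σ`. If `S ⊆ Q_σ` is mapped into itself by `M_σ`, the state is therefore back in `S`
after each block of `m` samples and the block of outputs `σ` starts again. Since `M_σ` is
injective, `S = A ∖ {0}` is such a set.
-/

open Set

theorem apply_iterate_mul_add_eq {α β : Type*} {f : α → α} {g : α → β} {m : ℕ} {y : Fin m → β}
    {S : Set α} (hS : MapsTo f^[m] S S) (hy : ∀ x ∈ S, ∀ j : Fin m, g (f^[j] x) = y j)
    {x : α} (hx : x ∈ S) (i : ℕ) (j : Fin m) : g (f^[i * m + j] x) = y j := by
  rw [Nat.add_comm, Nat.mul_comm, Function.iterate_add_apply, Function.iterate_mul]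
  exact hy _ (hS.iterate i hx) j

theorem mapsTo_diff_zero_of_map_le {R E F : Type*} [Semiring R] [AddCommMonoid E] [Module R E]
    [AddCommMonoid F] [Module R F] {g : E →ₗ[R] F} (hg : Function.Injective g)
    {A : Submodule R E} {B : Submodule R F} (hAB : A.map g ≤ B) :
    MapsTo g (A \ {0}) (B \ {0}) :=
  fun _ ⟨hxA, hx0⟩ ↦ ⟨hAB (Submodule.mem_map_of_mem hxA), (map_ne_zero_iff g hg).2 hx0⟩

section SampleSystem

variable {n m : ℕ} {M : ℝ → Matrix (Fin n) (Fin n) ℝ} {y : Fin m → ℝ}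

/-- The matrix `M_σ = M(y_m)⋯M(y_1)` of the sequence `σ = y`, the first entry of `y` being the
rightmost factor. -/
def seqMatrix (M : ℝ → Matrix (Fin n) (Fin n) ℝ) (y : Fin m → ℝ) : Matrix (Fin n) (Fin n) ℝ :=
  (List.ofFn fun j ↦ M (y j)).reverse.prod

/-- The isosequential set `Q_σ` of the sequence `σ = y`: the states from which the first `m`
inter-event times are the entries of `y`. -/
def isosequentialSet (τ : (Fin n → ℝ) → ℝ) (M : ℝ → Matrix (Fin n) (Fin n) ℝ) (y : Fin m → ℝ) :
    Set (Fin n → ℝ) :=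
  {x | ∀ j : Fin m, τ (seqStates M y x j) = y j}

theorem seqStates_succ (x : Fin n → ℝ) {k : ℕ} (hk : k < m) :
    seqStates M y x (k + 1) = M (y ⟨k, hk⟩) *ᵥ seqStates M y x k :=
  dif_pos hk

theorem seqStates_eq_prod_take_mulVec (x : Fin n → ℝ) {k : ℕ} (hk : k ≤ m) :
    seqStates M y x k = ((List.ofFn fun j ↦ M (y j)).take k).reverse.prod *ᵥ x := by
  induction k with
  | zero => simp [seqStates]
  | succ k ih =>
    have hlen : k < (List.ofFn fun j ↦ M (y j)).length := by simpa using hk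
    rw [seqStates_succ x hk, ih (Nat.le_of_succ_le hk), List.take_succ_eq_append_getElem hlen]
    simp [mulVec_mulVec]

theorem seqStates_length_eq_seqMatrix_mulVec (x : Fin n → ℝ) :
    seqStates M y x m = seqMatrix M y *ᵥ x := by
  rw [seqStates_eq_prod_take_mulVec x le_rfl, List.take_of_length_le (by simp), seqMatrix]

variable {τ : (Fin n → ℝ) → ℝ} {f : (Fin n → ℝ) → (Fin n → ℝ)}

theorem iterate_eq_seqStates (hf : ∀ x, f x = M (τ x) *ᵥ x) {x : Fin n → ℝ}
    (hx : x ∈ isosequentialSet τ M y) {k : ℕ} (hk : k ≤ m) : f^[k] x = seqStates M y x k := by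
  induction k with
  | zero => rfl
  | succ k ih =>
    rw [Function.iterate_succ_apply', ih (Nat.le_of_succ_le hk), hf, hx ⟨k, hk⟩,
      seqStates_succ x hk]

theorem periodic_pattern_from_linear_invariant_general (hf : ∀ x, f x = M (τ x) *ᵥ x)
    {S : Set (Fin n → ℝ)} (hSinv : MapsTo (seqMatrix M y).mulVec S S)
    (hSQ : S ⊆ isosequentialSet τ M y) :
    ∀ x ∈ S, ∀ (i : ℕ) (j : Fin m), τ (f^[i * m + j] x) = y j := by
  have hreturn : MapsTo f^[m] S S := fun x hx ↦ by
    rw [iterate_eq_seqStates hf (hSQ hx) le_rfl, seqStates_length_eq_seqMatrix_mulVec]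
    exact hSinv hx
  have hblock : ∀ x ∈ S, ∀ j : Fin m, τ (f^[j] x) = y j := fun x hx j ↦ by
    rw [iterate_eq_seqStates hf (hSQ hx) j.is_lt.le]
    exact hSQ hx j
  exact fun x hx ↦ apply_iterate_mul_add_eq hreturn hblock hx

end SampleSystem

/-- if `M_σ = M(y_m)⋯M(y_1)` is invertible and `A` is a linear subspace
with `M_σ A = A` and `A ∖ {0} ⊆ Q_σ`, then from every `x ∈ A ∖ {0}` the sample system
`x_{k+1} = f(x_k)` produces the periodic output sequence `σ^ω`:
`τ(x_{i·m+j}) = y j` for every `i ∈ ℕ` and `j ∈ {0, …, m-1}` (0-based indexing). -/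
theorem periodic_pattern_from_linear_invariant
    {n m : ℕ} (hn : 1 ≤ n) (hm : 1 ≤ m)
    (T : Set ℝ) (τbar : ℝ) (hτbar : 0 < τbar)
    (N : ℝ → Matrix (Fin n) (Fin n) ℝ) (hNsymm : ∀ s, (N s).IsSymm)
    (M : ℝ → Matrix (Fin n) (Fin n) ℝ)
    (τ : (Fin n → ℝ) → ℝ)
    (hτ : ∀ x, τ x = sInf {s | s ∈ T ∧ (0 < x ⬝ᵥ (N s) *ᵥ x ∨ s = τbar)})
    (f : (Fin n → ℝ) → (Fin n → ℝ))
    (hf : ∀ x, f x = (M (τ x)) *ᵥ x)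
    (y : Fin m → ℝ)
    (Mσ : Matrix (Fin n) (Fin n) ℝ)
    (hMσ : Mσ = (List.ofFn (fun j : Fin m => M (y j))).reverse.prod)
    (hMσunit : IsUnit Mσ)
    (A : Submodule ℝ (Fin n → ℝ))
    (hAinv : A.map (Matrix.mulVecLin Mσ) = A)
    (hAQ : ∀ x ∈ A, x ≠ 0 → ∀ j : Fin m, τ (seqStates M y x j) = y j) :
    ∀ x ∈ A, x ≠ 0 → ∀ (i : ℕ) (j : Fin m), τ (f^[i * m + j] x) = y j := by
  subst hMσ
  have hinv := mapsTo_diff_zero_of_map_le (mulVec_injective_of_isUnit hMσunit) hAinv.le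
  exact fun x hx hx0 ↦ periodic_pattern_from_linear_invariant_general hf hinv
    (fun z hz ↦ hAQ z hz.1 hz.2) x ⟨hx, hx0⟩
end

section
/- Let n be odd and let f : ℝⁿ → ℝⁿ be continuous, satisfy f(cx) = c f(x) for all c ≠ 0 and all x, and satisfy f(x) ≠ 0 whenever x ≠ 0. Then f has a fixed o-line: there exist v ≠ 0 and μ ∈ ℝ such that f(v) = μ·v. -/
/-!
Conjugating by a linear isomorphism, we may work in a Euclidean space `E` of odd dimension `N`. If
`f` had no eigenvector, then `x ↦ f x - ⟪x, f x⟫ x` would be a nowhere vanishing tangent field on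
the unit sphere, so the claim is the hairy ball theorem, for which we use Milnor's analytic
argument.

A nowhere vanishing tangent field can be made smooth and of unit length, and it then extends to a
positively homogeneous Lipschitz map `w : E → E` with `w x ⟂ x` and `‖w x‖ = ‖x‖`. For large `s` the
map `s - w` is a bijection of `E` that multiplies norms by `√(s² + 1)`, so it maps the unit ball to
a ball of volume `√(s² + 1) ^ N * vol(B)`. By the change of variables formula this volume is also
the integral of the characteristic polynomial `det (s - Dw)`, hence a polynomial `P` in `s`.
So `P ^ 2` is a constant times `(X ^ 2 + 1) ^ N`, which forces `N` to be even because `X ^ 2 + 1` is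
irreducible over the reals.
-/

open MeasureTheory Metric Module Polynomial Set
open scoped NNReal RealInnerProductSpace

section Polynomials

lemma even_of_associated_sq_prime_pow {M : Type*} [CommMonoidWithZero M] [IsCancelMulZero M]
    {p x : M} (hp : Prime p) {n : ℕ} (h : Associated (x ^ 2) (p ^ n)) : Even n := by
  obtain ⟨i, -, hi⟩ := (dvd_prime_pow hp n).1 ((dvd_pow_self x two_ne_zero).trans h.dvd)
  have hpow : Associated (p ^ (i * 2)) (p ^ n) := by
    rw [pow_mul]
    exact (hi.pow_pow (n := 2)).symm.trans h
  have hle : i * 2 ≤ n := (pow_dvd_pow_iff hp.ne_zero hp.not_isUnit).1 hpow.dvd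
  have hge : n ≤ i * 2 := (pow_dvd_pow_iff hp.ne_zero hp.not_isUnit).1 hpow.symm.dvd
  exact ⟨i, by lia⟩

lemma prime_X_sq_add_one : Prime (X ^ 2 + 1 : ℝ[X]) := by
  have hdeg : (X ^ 2 + 1 : ℝ[X]).natDegree = 2 := by compute_degree!
  refine (irreducible_of_degree_le_three_of_not_isRoot (by simp [hdeg]) fun x hx ↦ ?_).prime
  have : x ^ 2 + 1 = 0 := by simpa using hx
  nlinarith

lemma even_of_eval_eq_sqrt_pow_mul {n : ℕ} {P : ℝ[X]} {V : ℝ} (hV : V ≠ 0) {T : Set ℝ}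
    (hT : T.Infinite) (h : ∀ s ∈ T, P.eval s = √(s ^ 2 + 1) ^ n * V) : Even n := by
  have hsq : P ^ 2 = (X ^ 2 + 1) ^ n * C (V ^ 2) := by
    refine eq_of_infinite_eval_eq _ _ (hT.mono fun s hs ↦ ?_)
    have hsqrt : (√(s ^ 2 + 1) ^ n) ^ 2 = (s ^ 2 + 1) ^ n := by
      rw [pow_right_comm, Real.sq_sqrt (by positivity)]
    simp [h s hs, mul_pow, hsqrt]
  refine even_of_associated_sq_prime_pow prime_X_sq_add_one (x := P) ?_
  rw [hsq]
  exact associated_mul_unit_left _ _ (isUnit_C.2 (by simpa using hV))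

lemma exists_eval_eq_integral_eval {𝕜 α : Type*} [RCLike 𝕜] [MeasurableSpace α] {μ : Measure α}
    {q : α → 𝕜[X]} {N : ℕ} (hq : ∀ x, (q x).natDegree ≤ N) {T : Set 𝕜} (hT : T.Infinite)
    (hint : ∀ s ∈ T, Integrable (fun x ↦ (q x).eval s) μ) :
    ∃ P : 𝕜[X], ∀ s, P.eval s = ∫ x, (q x).eval s ∂μ := by
  obtain ⟨nodes, hnodes, hcard⟩ := hT.exists_subset_card_eq (N + 1)
  have hlagrange (x : α) (s : 𝕜) : (q x).eval s =
      ∑ t ∈ nodes, (q x).eval t * (Lagrange.basis nodes id t).eval s := by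
    have hdeg : (q x).degree < nodes.card := by
      rw [hcard]
      exact degree_le_natDegree.trans_lt (by exact_mod_cast Nat.lt_succ_of_le (hq x))
    conv_lhs => rw [Lagrange.eq_interpolate (v := id) (injOn_id _) hdeg]
    simp [Lagrange.interpolate_apply, eval_finsetSum]
  refine ⟨∑ t ∈ nodes, C (∫ x, (q x).eval t ∂μ) * Lagrange.basis nodes id t, fun s ↦ ?_⟩
  simp_rw [hlagrange _ s]
  rw [integral_finsetSum _ fun t ht ↦ (hint t (hnodes ht)).mul_const _]
  simp [eval_finsetSum, integral_mul_const]

end Polynomials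

section LinearPerturbation

variable {𝕜 F : Type*} [NontriviallyNormedField 𝕜] [NormedAddCommGroup F] [NormedSpace 𝕜 F]

lemma norm_le_opNorm_of_hasEigenvalue {A : F →L[𝕜] F} {c : 𝕜}
    (hc : End.HasEigenvalue (A : F →ₗ[𝕜] F) c) : ‖c‖ ≤ ‖A‖ := by
  obtain ⟨v, hv⟩ := hc.exists_hasEigenvector
  have hAv : A v = c • v := hv.apply_eq_smul
  refine le_of_mul_le_mul_right ?_ (norm_pos_iff.2 hv.2)
  rw [← norm_smul, ← hAv]
  exact A.le_opNorm v

lemma eval_charpoly_pos_of_opNorm_lt {E : Type*} [NormedAddCommGroup E] [NormedSpace ℝ E]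
    [FiniteDimensional ℝ E] {A : E →L[ℝ] E} {s : ℝ} (hs : ‖A‖ < s) :
    0 < (A : E →ₗ[ℝ] E).charpoly.eval s := by
  refine zero_lt_eval_of_roots_lt_of_leadingCoeff_nonneg (fun t ht ↦ ?_) ?_
  · have hA := norm_le_opNorm_of_hasEigenvalue
      ((End.hasEigenvalue_iff_isRoot_charpoly (A : E →ₗ[ℝ] E) t).2 ht)
    exact ((le_abs_self t).trans hA).trans_lt hs
  · simp [(LinearMap.charpoly_monic (A : E →ₗ[ℝ] E)).leadingCoeff]

lemma bijective_smul_sub_of_lipschitzWith [CompleteSpace F] {w : F → F} {K : ℝ≥0}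
    (hw : LipschitzWith K w) {s : 𝕜} (hs : K < ‖s‖) :
    Function.Bijective fun x ↦ s • x - w x := by
  have hs0 : s ≠ 0 := norm_pos_iff.1 (K.2.trans_lt hs)
  let S : F ≃L[𝕜] F := ContinuousLinearEquiv.smulLeft (Units.mk0 s hs0)
  have happrox : ApproximatesLinearOn (fun x ↦ s • x - w x) (S : F →L[𝕜] F) univ K := by
    refine LipschitzOnWith.approximatesLinearOn ?_
    have hsub : (fun x ↦ s • x - w x) - ⇑(S : F →L[𝕜] F) = fun x ↦ -w x := by
      ext x
      exact sub_sub_cancel_left (s • x) (w x)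
    exact hsub ▸ hw.neg.lipschitzOnWith
  have hK : Subsingleton F ∨ K < ‖(S.symm : F →L[𝕜] F)‖₊⁻¹ := by
    rcases subsingleton_or_nontrivial F with hF | hF
    · exact .inl hF
    have hsymm : ‖(S.symm : F →L[𝕜] F)‖ ≤ ‖s‖⁻¹ :=
      ContinuousLinearMap.opNorm_le_bound _ (by positivity) fun x ↦
        (norm_smul s⁻¹ x).le.trans_eq (by rw [norm_inv])
    refine .inr (hs.trans_le (?_ : ‖s‖ ≤ ‖(S.symm : F →L[𝕜] F)‖⁻¹))
    exact (le_inv_comm₀ (norm_pos_iff.2 hs0) S.symm.norm_pos).2 hsymm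
  exact ⟨injOn_univ.1 (happrox.injOn hK), happrox.surjective hK⟩

end LinearPerturbation

section Volume

variable {E : Type*} [NormedAddCommGroup E] [NormedSpace ℝ E] {w : E → E} {K : ℝ≥0}
  {S : Set E} {s : ℝ}

lemma hasFDerivWithinAt_smul_sub (s : ℝ) {x : E} (hw : DifferentiableAt ℝ w x) :
    HasFDerivWithinAt (fun x ↦ s • x - w x)
      (s • ContinuousLinearMap.id ℝ E - fderiv ℝ w x) S x :=
  (((hasFDerivAt_id x).const_smul s).sub hw.hasFDerivAt).hasFDerivWithinAt

variable [FiniteDimensional ℝ E]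

lemma abs_det_smul_id_sub_fderiv (hw : LipschitzWith K w) (hs : K < s) (x : E) :
    |(s • ContinuousLinearMap.id ℝ E - fderiv ℝ w x).det| =
      (fderiv ℝ w x : E →ₗ[ℝ] E).charpoly.eval s := by
  have hpos := eval_charpoly_pos_of_opNorm_lt
    ((norm_fderiv_le_of_lipschitz ℝ hw (x₀ := x)).trans_lt hs)
  rw [← abs_of_pos hpos, LinearMap.eval_charpoly]
  rfl

variable [MeasurableSpace E] [BorelSpace E] (μ : Measure E) [μ.IsAddHaarMeasure]

lemma integrableOn_eval_charpoly_fderiv (hw : LipschitzWith K w) (hS : MeasurableSet S)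
    (hd : ∀ x ∈ S, DifferentiableAt ℝ w x) (hs : K < s)
    (hfin : μ ((fun x ↦ s • x - w x) '' S) ≠ ⊤) :
    IntegrableOn (fun x ↦ (fderiv ℝ w x : E →ₗ[ℝ] E).charpoly.eval s) S μ := by
  have hchange := integrableOn_image_iff_integrableOn_abs_det_fderiv_smul μ hS
    (fun x hx ↦ hasFDerivWithinAt_smul_sub s (hd x hx))
    (bijective_smul_sub_of_lipschitzWith hw (hs.trans_le (le_abs_self s))).injective.injOn
    fun _ ↦ (1 : ℝ)
  simp only [abs_det_smul_id_sub_fderiv hw hs, smul_eq_mul, mul_one] at hchange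
  exact hchange.1 (integrableOn_const hfin)

lemma setIntegral_eval_charpoly_fderiv (hw : LipschitzWith K w) (hS : MeasurableSet S)
    (hd : ∀ x ∈ S, DifferentiableAt ℝ w x) (hs : K < s) :
    ∫ x in S, (fderiv ℝ w x : E →ₗ[ℝ] E).charpoly.eval s ∂μ =
      μ.real ((fun x ↦ s • x - w x) '' S) := by
  have hchange := integral_image_eq_integral_abs_det_fderiv_smul μ hS
    (fun x hx ↦ hasFDerivWithinAt_smul_sub s (hd x hx))
    (bijective_smul_sub_of_lipschitzWith hw (hs.trans_le (le_abs_self s))).injective.injOn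
    fun _ ↦ (1 : ℝ)
  simp only [abs_det_smul_id_sub_fderiv hw hs, smul_eq_mul, mul_one] at hchange
  simp [← hchange]

lemma exists_eval_eq_measureReal_image_smul_sub (hw : LipschitzWith K w) (hS : MeasurableSet S)
    (hSb : Bornology.IsBounded S) (hd : ∀ x ∈ S, DifferentiableAt ℝ w x) :
    ∃ P : ℝ[X], ∀ s ∈ Ioi (K : ℝ), P.eval s = μ.real ((fun x ↦ s • x - w x) '' S) := by
  have hfin (s : ℝ) : μ ((fun x ↦ s • x - w x) '' S) ≠ ⊤ := by
    have hlip := (lipschitzWith_smul s (β := E)).sub hw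
    exact (hlip.isBounded_image hSb).measure_lt_top.ne
  obtain ⟨P, hP⟩ := exists_eval_eq_integral_eval (μ := μ.restrict S) (T := Ioi (K : ℝ))
    (q := fun x ↦ (fderiv ℝ w x : E →ₗ[ℝ] E).charpoly) (N := finrank ℝ E)
    (fun _ ↦ (LinearMap.charpoly_natDegree _).le) (Ioi_infinite _) fun s hs ↦
      integrableOn_eval_charpoly_fderiv μ hw hS hd hs (hfin s)
  exact ⟨P, fun s hs ↦ (hP s).trans (setIntegral_eval_charpoly_fderiv μ hw hS hd hs)⟩

end Volume

lemma image_ball_diff_zero_of_norm_eq_mul {E F : Type*} [NormedAddCommGroup E]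
    [NormedAddCommGroup F] {g : E → F} (hg : Function.Surjective g) {r : ℝ} (hr : 0 < r)
    (hnorm : ∀ x, ‖g x‖ = r * ‖x‖) (ρ : ℝ) :
    g '' (ball 0 ρ \ {0}) = ball 0 (r * ρ) \ {0} := by
  have hpre : g ⁻¹' (ball 0 (r * ρ) \ {0}) = ball 0 ρ \ {0} := by
    ext x
    simp [← norm_eq_zero (a := g x), hnorm, hr, hr.ne']
  rw [← hpre, image_preimage_eq _ hg]

section RadialExtension

variable {E F : Type*} [NormedAddCommGroup E] [NormedSpace ℝ E] [NormedAddCommGroup F]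
  [NormedSpace ℝ F] {u : E → F}

open NormedSpace (normalize norm_normalize norm_smul_normalize)

/-- The positively homogeneous map of degree one that agrees with `u` on the unit sphere; the values
of `u` off the sphere are ignored. It turns fields on the sphere into maps of the whole space. -/
noncomputable def radialExtension (u : E → F) (x : E) : F := ‖x‖ • u (normalize x)

namespace radialExtension

lemma map_zero (u : E → F) : radialExtension u 0 = 0 := by
  simp [radialExtension]

lemma norm_le {M : ℝ} (hu : ∀ x ∈ sphere (0 : E) 1, ‖u x‖ ≤ M) (x : E) :
    ‖radialExtension u x‖ ≤ M * ‖x‖ := by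
  rcases eq_or_ne x 0 with rfl | hx
  · simp [map_zero]
  · rw [radialExtension, norm_smul, norm_norm, mul_comm]
    gcongr
    exact hu _ (mem_sphere_zero_iff_norm.2 (norm_normalize hx))

lemma norm_eq (hu : ∀ x ∈ sphere (0 : E) 1, ‖u x‖ = 1) (x : E) : ‖radialExtension u x‖ = ‖x‖ := by
  rcases eq_or_ne x 0 with rfl | hx
  · simp [map_zero]
  · simp [radialExtension, norm_smul, hu _ (mem_sphere_zero_iff_norm.2 (norm_normalize hx))]

lemma inner_eq_zero {E : Type*} [NormedAddCommGroup E] [InnerProductSpace ℝ E] {u : E → E}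
    (hu : ∀ x ∈ sphere (0 : E) 1, ⟪x, u x⟫ = 0) (x : E) : ⟪x, radialExtension u x⟫ = 0 := by
  rcases eq_or_ne x 0 with rfl | hx
  · simp
  · have h := hu _ (mem_sphere_zero_iff_norm.2 (norm_normalize hx))
    nth_rw 1 [← norm_smul_normalize x]
    rw [radialExtension, real_inner_smul_left, real_inner_smul_right, h, mul_zero, mul_zero]

lemma differentiableAt {E : Type*} [NormedAddCommGroup E] [InnerProductSpace ℝ E] {u : E → F}
    {x : E} (hx : x ≠ 0) (hu : DifferentiableAt ℝ u (normalize x)) :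
    DifferentiableAt ℝ (radialExtension u) x := by
  have hnorm : DifferentiableAt ℝ (fun y : E ↦ ‖y‖) x := differentiableAt_id.norm ℝ hx
  have hnormalize : DifferentiableAt ℝ (normalize : E → E) x :=
    (hnorm.inv (norm_ne_zero_iff.2 hx)).smul differentiableAt_id
  exact hnorm.smul (hu.comp x hnormalize)

end radialExtension

lemma norm_mul_norm_normalize_sub_normalize_le {x : E} (hx : x ≠ 0) (y : E) :
    ‖y‖ * ‖normalize x - normalize y‖ ≤ 2 * ‖x - y‖ := by
  have hsplit : ‖y‖ • (normalize x - normalize y) = (x - y) - (‖x‖ - ‖y‖) • normalize x := by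
    rw [smul_sub, sub_smul, norm_smul_normalize, norm_smul_normalize]
    abel
  calc ‖y‖ * ‖normalize x - normalize y‖ = ‖(x - y) - (‖x‖ - ‖y‖) • normalize x‖ := by
        rw [← hsplit, norm_smul, norm_norm]
    _ ≤ ‖x - y‖ + |‖x‖ - ‖y‖| := by
        refine (norm_sub_le _ _).trans_eq ?_
        rw [norm_smul, norm_normalize hx, mul_one, Real.norm_eq_abs]
    _ ≤ 2 * ‖x - y‖ := by linarith [abs_norm_sub_norm_le x y]

lemma radialExtension.lipschitzWith {M L : ℝ≥0} (hM : ∀ x ∈ sphere (0 : E) 1, ‖u x‖ ≤ M)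
    (hL : LipschitzOnWith L u (sphere 0 1)) : LipschitzWith (M + 2 * L) (radialExtension u) := by
  have hmem {x : E} (hx : x ≠ 0) : normalize x ∈ sphere (0 : E) 1 :=
    mem_sphere_zero_iff_norm.2 (norm_normalize hx)
  have hbound (x : E) : ‖radialExtension u x‖ ≤ (M + 2 * L) * ‖x‖ := by
    refine (norm_le hM x).trans ?_
    gcongr
    exact le_add_of_nonneg_right (by positivity)
  refine LipschitzWith.of_dist_le_mul fun x y ↦ ?_
  rw [dist_eq_norm, dist_eq_norm]
  push_cast
  rcases eq_or_ne x 0 with rfl | hx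
  · simpa [map_zero] using hbound y
  rcases eq_or_ne y 0 with rfl | hy
  · simpa [map_zero] using hbound x
  have hsplit : radialExtension u x - radialExtension u y =
      (‖x‖ - ‖y‖) • u (normalize x) + ‖y‖ • (u (normalize x) - u (normalize y)) := by
    simp only [radialExtension, sub_smul, smul_sub]
    abel
  calc ‖radialExtension u x - radialExtension u y‖
      ≤ |‖x‖ - ‖y‖| * ‖u (normalize x)‖ + ‖y‖ * ‖u (normalize x) - u (normalize y)‖ := by
        rw [hsplit]
        refine (norm_add_le _ _).trans_eq ?_
        rw [norm_smul, norm_smul, norm_norm, Real.norm_eq_abs]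
    _ ≤ ‖x - y‖ * M + ‖y‖ * (L * ‖normalize x - normalize y‖) := by
        gcongr
        · exact abs_norm_sub_norm_le x y
        · exact hM _ (hmem hx)
        · exact hL.norm_sub_le (hmem hx) (hmem hy)
    _ = M * ‖x - y‖ + L * (‖y‖ * ‖normalize x - normalize y‖) := by ring
    _ ≤ M * ‖x - y‖ + L * (2 * ‖x - y‖) := by
        grw [norm_mul_norm_normalize_sub_normalize_le hx y]
    _ = (M + 2 * L) * ‖x - y‖ := by ring

end RadialExtension

section HairyBall

variable {E : Type*} [NormedAddCommGroup E] [InnerProductSpace ℝ E]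

lemma norm_smul_sub_of_inner_eq_zero {x y : E} (hxy : ⟪x, y⟫ = 0) (hy : ‖y‖ = ‖x‖) (s : ℝ) :
    ‖s • x - y‖ = √(s ^ 2 + 1) * ‖x‖ := by
  refine (sq_eq_sq₀ (norm_nonneg _) (by positivity)).1 ?_
  rw [norm_sub_sq_real, inner_smul_left, hxy, hy, norm_smul, mul_pow, mul_pow,
    Real.sq_sqrt (by positivity), Real.norm_eq_abs, sq_abs]
  ring

theorem even_finrank_of_lipschitzWith_of_inner_eq_zero [FiniteDimensional ℝ E] {w : E → E}
    {K : ℝ≥0} (hw : LipschitzWith K w) (hd : ∀ x ≠ 0, DifferentiableAt ℝ w x)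
    (horth : ∀ x, ⟪x, w x⟫ = 0) (hnorm : ∀ x, ‖w x‖ = ‖x‖) : Even (finrank ℝ E) := by
  rcases subsingleton_or_nontrivial E with hE | hE
  · simp [finrank_zero_of_subsingleton]
  borelize E
  let μ : Measure E := Measure.addHaar
  obtain ⟨P, hP⟩ := exists_eval_eq_measureReal_image_smul_sub μ hw
    (measurableSet_ball.diff (measurableSet_singleton 0)) (isBounded_ball.subset sdiff_subset)
    fun x (hx : x ∈ ball 0 1 \ {0}) ↦ hd x hx.2
  have hV : μ.real (ball 0 1) ≠ 0 :=
    (ENNReal.toReal_pos (measure_ball_pos μ 0 one_pos).ne' measure_ball_lt_top.ne).ne'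
  refine even_of_eval_eq_sqrt_pow_mul (P := P) hV (Ioi_infinite (K : ℝ)) fun s hs ↦ ?_
  have hsurj : Function.Surjective fun x ↦ s • x - w x :=
    (bijective_smul_sub_of_lipschitzWith hw (hs.trans_le (le_abs_self s))).surjective
  have himage : (fun x ↦ s • x - w x) '' (ball 0 1 \ {0}) = ball 0 √(s ^ 2 + 1) \ {0} := by
    simpa using image_ball_diff_zero_of_norm_eq_mul hsurj (by positivity : 0 < √(s ^ 2 + 1))
      (fun x ↦ norm_smul_sub_of_inner_eq_zero (horth x) (hnorm x) s) 1
  rw [hP s hs, himage, measureReal_def, measure_sdiff_null (measure_singleton 0),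
    Measure.addHaar_ball μ _ (by positivity), ENNReal.toReal_mul,
    ENNReal.toReal_ofReal (by positivity), measureReal_def]

theorem even_finrank_of_contDiffAt_unit_tangent_field [FiniteDimensional ℝ E] {u : E → E}
    (hu : ∀ x ∈ sphere (0 : E) 1, ContDiffAt ℝ 1 u x)
    (horth : ∀ x ∈ sphere (0 : E) 1, ⟪x, u x⟫ = 0) (hunit : ∀ x ∈ sphere (0 : E) 1, ‖u x‖ = 1) :
    Even (finrank ℝ E) := by
  obtain ⟨L, hL⟩ : ∃ L, LipschitzOnWith L u (sphere 0 1) := by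
    refine LocallyLipschitzOn.exists_lipschitzOnWith_of_compact (isCompact_sphere _ _) fun x hx ↦ ?_
    obtain ⟨K, t, ht, hKt⟩ := (hu x hx).exists_lipschitzOnWith
    exact ⟨K, t, mem_nhdsWithin_of_mem_nhds ht, hKt⟩
  refine even_finrank_of_lipschitzWith_of_inner_eq_zero
    (radialExtension.lipschitzWith (M := 1) (fun x hx ↦ (hunit x hx).le) hL) (fun x hx ↦ ?_)
    (radialExtension.inner_eq_zero horth) (radialExtension.norm_eq hunit)
  have hsphere := mem_sphere_zero_iff_norm.2 (NormedSpace.norm_normalize hx)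
  exact radialExtension.differentiableAt hx ((hu _ hsphere).differentiableAt one_ne_zero)

lemma inner_sub_inner_smul_self_eq_zero {x : E} (hx : ‖x‖ = 1) (y : E) :
    ⟪x, y - ⟪x, y⟫ • x⟫ = 0 := by
  simp [inner_sub_right, inner_smul_right, hx]

lemma norm_le_norm_sub_of_inner_eq_zero {x y : E} (h : ⟪x, y⟫ = 0) : ‖y‖ ≤ ‖x - y‖ := by
  refine (sq_le_sq₀ (norm_nonneg _) (norm_nonneg _)).1 ?_
  rw [norm_sub_sq_real, h]
  nlinarith [sq_nonneg ‖x‖]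

lemma exists_contDiff_tangent_field_ne_zero [FiniteDimensional ℝ E] {v : E → E}
    (hv : ContinuousOn v (sphere 0 1)) (horth : ∀ x ∈ sphere (0 : E) 1, ⟪x, v x⟫ = 0)
    (hne : ∀ x ∈ sphere (0 : E) 1, v x ≠ 0) :
    ∃ g : E → E, ContDiff ℝ 1 g ∧ ∀ x ∈ sphere (0 : E) 1, ⟪x, g x⟫ = 0 ∧ g x ≠ 0 := by
  obtain ⟨ε, hε, hle⟩ := (isCompact_sphere (0 : E) 1).exists_forall_le' hv.norm
    fun x hx ↦ norm_pos_iff.2 (hne x hx)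
  obtain ⟨v', hv'⟩ := ContinuousMap.exists_restrict_eq isClosed_sphere ⟨_, hv.domRestrict⟩
  obtain ⟨g, hg, hdist, -⟩ := v'.continuous.exists_contDiff_approx 1 continuous_const fun _ ↦ hε
  refine ⟨fun x ↦ g x - ⟪x, g x⟫ • x, hg.sub ((contDiff_id.inner ℝ hg).smul contDiff_id),
    fun x hx ↦ ⟨inner_sub_inner_smul_self_eq_zero (mem_sphere_zero_iff_norm.1 hx) _, fun h0 ↦ ?_⟩⟩
  have hgv : ⟪g x, v x⟫ = 0 := by
    rw [sub_eq_zero.1 h0, inner_smul_left, horth x hx, mul_zero]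
  have hclose : ‖g x - v x‖ < ε := by
    have hv'x : v' x = v x := DFunLike.congr_fun hv' ⟨x, hx⟩
    rw [← hv'x, ← dist_eq_norm]
    exact hdist x
  exact (hle x hx).not_gt ((norm_le_norm_sub_of_inner_eq_zero hgv).trans_lt hclose)

theorem hairy_ball (hE : Odd (finrank ℝ E)) {v : E → E} (hv : ContinuousOn v (sphere 0 1))
    (horth : ∀ x ∈ sphere (0 : E) 1, ⟪x, v x⟫ = 0) : ∃ x ∈ sphere (0 : E) 1, v x = 0 := by
  have : FiniteDimensional ℝ E := .of_finrank_pos hE.pos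
  by_contra! hne
  obtain ⟨g, hg, htangent⟩ := exists_contDiff_tangent_field_ne_zero hv horth hne
  refine Nat.not_even_iff_odd.2 hE (even_finrank_of_contDiffAt_unit_tangent_field
    (u := fun x ↦ NormedSpace.normalize (g x)) (fun x hx ↦ ?_) (fun x hx ↦ ?_) fun x hx ↦ ?_)
  · have hgx := (htangent x hx).2
    exact ((hg.contDiffAt.norm ℝ hgx).inv (norm_ne_zero_iff.2 hgx)).smul hg.contDiffAt
  · simp [NormedSpace.normalize, inner_smul_right, (htangent x hx).1]
  · exact NormedSpace.norm_normalize (htangent x hx).2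

theorem exists_mem_sphere_apply_eq_smul (hE : Odd (finrank ℝ E)) {f : E → E}
    (hf : ContinuousOn f (sphere 0 1)) : ∃ x ∈ sphere (0 : E) 1, ∃ c : ℝ, f x = c • x := by
  obtain ⟨x, hx, h0⟩ := hairy_ball hE (v := fun x ↦ f x - ⟪x, f x⟫ • x) (by fun_prop)
    fun x hx ↦ inner_sub_inner_smul_self_eq_zero (mem_sphere_zero_iff_norm.1 hx) (f x)
  exact ⟨x, hx, _, sub_eq_zero.1 h0⟩

end HairyBall

theorem odd_dimension_fixed_oline_general {E : Type*} [AddCommGroup E] [Module ℝ E]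
    [TopologicalSpace E] [IsTopologicalAddGroup E] [ContinuousSMul ℝ E] [T2Space E]
    (hE : Odd (finrank ℝ E)) {f : E → E} (hf : ContinuousOn f {0}ᶜ) :
    ∃ v : E, v ≠ 0 ∧ ∃ μ : ℝ, f v = μ • v := by
  have : FiniteDimensional ℝ E := .of_finrank_pos hE.pos
  let e : E ≃L[ℝ] EuclideanSpace ℝ (Fin (finrank ℝ E)) := toEuclidean
  have hsphere (x) (hx : x ∈ sphere (0 : EuclideanSpace ℝ (Fin (finrank ℝ E))) 1) :
      e.symm x ≠ 0 := by
    simpa using ne_zero_of_mem_unit_sphere ⟨x, hx⟩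
  obtain ⟨x, hx, μ, hμ⟩ := exists_mem_sphere_apply_eq_smul (f := e ∘ f ∘ e.symm) (by simpa using hE)
    (e.continuous.comp_continuousOn (hf.comp e.symm.continuous.continuousOn hsphere))
  refine ⟨e.symm x, hsphere x hx, μ, e.injective ?_⟩
  simpa using hμ

/-- every continuous homogeneous map `f : ℝⁿ → ℝⁿ` (with `n` odd) that
does not vanish away from the origin has a fixed o-line: there are `v ≠ 0` and `μ ∈ ℝ`
with `f(v) = μ v`. -/
theorem odd_dimension_fixed_oline
    {n : ℕ} (hn : Odd n)
    (f : (Fin n → ℝ) → (Fin n → ℝ))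
    (hcont : Continuous f)
    (hhom : ∀ (c : ℝ), c ≠ 0 → ∀ x, f (c • x) = c • f x)
    (hnz : ∀ x : Fin n → ℝ, x ≠ 0 → f x ≠ 0) :
    ∃ (v : Fin n → ℝ), v ≠ 0 ∧ ∃ μ : ℝ, f v = μ • v :=
  odd_dimension_fixed_oline_general (by simpa using hn) hcont.continuousOn
end
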